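/- (Ehrenfeucht's compactness property.) For every n and every alphabet A, every independent system of word equations in n variables, with solutions taken in the free monoid on A, is finite. -/

import Mathlib

/-- A monoid morphism `h` from the free monoid on the variables `Ξ` to a monoid `M`
is a solution of the equation `E = (U, V)` if `h U = h V`. -/
def IsSolution {Ξ M : Type*} [Monoid M] (h : FreeMonoid Ξ →* M)
    (E : FreeMonoid Ξ × FreeMonoid Ξ) : Prop :=
  h E.1 = h E.2

/-- Affine embedding of a free monoid in 2 by 2 matrices. -/
noncomputable def affEmb (A : Type*) :
    FreeMonoid A →* Matrix (Fin 2) (Fin 2) (Polynomial (MvPolynomial A ℤ)) :=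
  FreeMonoid.lift fun a => !![Polynomial.X, Polynomial.C (MvPolynomial.X a); 0, 1]

theorem affEmb_row (A : Type*) (w : FreeMonoid A) :
    affEmb A w 1 0 = 0 ∧ affEmb A w 1 1 = 1 := by
  induction w using FreeMonoid.inductionOn' with
  | one => simp
  | of_mul a w ih =>
    rw [map_mul]
    simp [affEmb, Matrix.mul_apply, Fin.sum_univ_two] at ih ⊢
    exact ih

theorem affEmb_of_mul (A : Type*) (a : A) (w : FreeMonoid A) :
    affEmb A (FreeMonoid.of a * w) 0 0 = Polynomial.X * affEmb A w 0 0 ∧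
    affEmb A (FreeMonoid.of a * w) 0 1 =
      Polynomial.X * affEmb A w 0 1 + Polynomial.C (MvPolynomial.X a) := by
  have h := affEmb_row A w
  have h1 : affEmb A (FreeMonoid.of a) =
    !![Polynomial.X, Polynomial.C (MvPolynomial.X a); 0, 1] := by simp [affEmb]
  rw [map_mul, h1]
  simp [Matrix.mul_apply, Fin.sum_univ_two, h.1, h.2]

theorem affEmb_inj_aux (A : Type*) (w : FreeMonoid A) : ∀ w' : FreeMonoid A,
    affEmb A w 0 0 = affEmb A w' 0 0 → affEmb A w 0 1 = affEmb A w' 0 1 → w = w' := by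
  induction w using FreeMonoid.inductionOn' with
  | one =>
    intro w'
    induction w' using FreeMonoid.inductionOn' with
    | one => simp
    | of_mul b w' _ =>
      intro h _
      rw [(affEmb_of_mul A b w').1] at h
      have := congrArg (fun p => Polynomial.coeff p 0) h
      simp at this
  | of_mul a w ih =>
    intro w'
    induction w' using FreeMonoid.inductionOn' with
    | one =>
      intro h _
      rw [(affEmb_of_mul A a w).1] at h
      have := congrArg (fun p => Polynomial.coeff p 0) h
      simp at this
    | of_mul b w' _ =>
      intro h h2
      rw [(affEmb_of_mul A a w).1, (affEmb_of_mul A b w').1] at h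
      rw [(affEmb_of_mul A a w).2, (affEmb_of_mul A b w').2] at h2
      have hab : a = b := by
        have := congrArg (fun p => Polynomial.coeff p 0) h2
        simpa using this
      subst hab
      rw [ih w' (mul_left_cancel₀ Polynomial.X_ne_zero h)
        (mul_left_cancel₀ Polynomial.X_ne_zero (add_right_cancel h2))]

theorem affEmb_injective (A : Type*) : Function.Injective (affEmb A) := fun w w' h =>
  affEmb_inj_aux A w w' (by rw [h]) (by rw [h])

/-- Generic 2 by 2 matrices. -/
noncomputable def genMat (n : ℕ) :
    FreeMonoid (Fin n) →* Matrix (Fin 2) (Fin 2) (MvPolynomial (Fin n × Fin 2 × Fin 2) ℤ) :=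
  FreeMonoid.lift fun k => Matrix.of fun i j => MvPolynomial.X (k, i, j)

theorem exists_specialization (n : ℕ) {R : Type*} [CommRing R]
    (h : FreeMonoid (Fin n) →* Matrix (Fin 2) (Fin 2) R) :
    ∃ φ : MvPolynomial (Fin n × Fin 2 × Fin 2) ℤ →+* R,
      ∀ w i j, φ (genMat n w i j) = h w i j := by
  let φ : MvPolynomial (Fin n × Fin 2 × Fin 2) ℤ →+* R :=
    MvPolynomial.eval₂Hom (Int.castRingHom R) fun x => h (FreeMonoid.of x.1) x.2.1 x.2.2
  have key : ((φ.mapMatrix (m := Fin 2)).toMonoidHom).comp (genMat n) = h := by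
    apply FreeMonoid.hom_eq
    intro k
    ext i j
    simp [genMat, φ]
  refine ⟨φ, fun w i j => ?_⟩
  rw [← key]
  rfl

/-- Ehrenfeucht's compactness property: every independent system of word equations
in `n` variables, with solutions in the free monoid on the alphabet `A`, is finite. -/
theorem independent_system_of_word_equations_finite (n : ℕ) (A : Type*)
    (S : Set (FreeMonoid (Fin n) × FreeMonoid (Fin n)))
    (hind : ∀ e ∈ S, ∃ h : FreeMonoid (Fin n) →* FreeMonoid A,
      (∀ e' ∈ S, e' ≠ e → IsSolution h e') ∧ ¬ IsSolution h e) :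
    S.Finite := by
  classical
  let s : Set (MvPolynomial (Fin n × Fin 2 × Fin 2) ℤ) :=
    {p | ∃ e ∈ S, ∃ i j, p = genMat n e.1 i j - genMat n e.2 i j}
  obtain ⟨t, hts, hspan⟩ := Submodule.fg_span_iff_fg_span_finset_subset s |>.1
    (IsNoetherian.noetherian (Ideal.span s))
  have hts' : ∀ p : t, ∃ e ∈ S, ∃ i j, (p : MvPolynomial _ ℤ) =
    genMat n e.1 i j - genMat n e.2 i j := fun p => hts p.2
  choose g hgS hg using hts'
  refine (Set.finite_range g).subset fun e he => ?_
  by_contra hne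
  obtain ⟨h, hsol, hnot⟩ := hind e he
  obtain ⟨φ, hφ⟩ := exists_specialization n ((affEmb A).comp h)
  have hker : Ideal.span (t : Set (MvPolynomial (Fin n × Fin 2 × Fin 2) ℤ)) ≤
      RingHom.ker φ := by
    rw [Ideal.span_le]
    intro p hp
    obtain ⟨i, j, hp'⟩ := hg ⟨p, hp⟩
    have hs : h (g ⟨p, hp⟩).1 = h (g ⟨p, hp⟩).2 :=
      hsol _ (hgS ⟨p, hp⟩) (fun hh => hne ⟨_, hh⟩)
    change φ p = 0
    change p = _ at hp'
    rw [hp', map_sub, hφ, hφ]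
    simp [hs]
  apply hnot
  apply affEmb_injective A
  ext1 i j
  have hm : genMat n e.1 i j - genMat n e.2 i j ∈ Ideal.span s :=
    Ideal.subset_span ⟨e, he, i, j, rfl⟩
  have hm2 : φ (genMat n e.1 i j - genMat n e.2 i j) = 0 := hker (hspan.le hm)
  rw [map_sub, hφ, hφ] at hm2
  exact sub_eq_zero.1 hm2
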